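/- arXiv:1709.07259 — 2 statements merged into one kernel-verified Lean document; each statement's English description precedes it below -/
import Mathlib

section
/- Let φ ∈ (0,1). Let G be a random variable on ℕ with P[G = g] = (1−φ^h)^g · φ^h for all g ∈ ℕ (the number of nodes of height at most h preceding the first node of height exceeding h), and conditionally on G = g let C be binomially distributed with g trials and success probability p = φ^{h−1}(1−φ)/(1−φ^h) (the probability that a geometric height equals h given that it is at most h). Then the expectation of C equals (1−φ)/φ. -/
theorem binom_mean_aux (p : ℝ) (g : ℕ) :
    (∑ c ∈ Finset.range (g + 1), (c : ℝ) * (g.choose c : ℝ) * p ^ c * (1 - p) ^ (g - c))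
      = g * p := by
  cases g with
  | zero => simp
  | succ n =>
    rw [Finset.sum_range_succ']
    have h1 : (∑ c ∈ Finset.range (n + 1), p ^ c * (1 - p) ^ (n - c) * (n.choose c : ℝ)) = 1 := by
      rw [← add_pow]; simp
    have h2 : ∀ c ∈ Finset.range (n + 1),
        ((c + 1 : ℕ) : ℝ) * ((n + 1).choose (c + 1) : ℝ) * p ^ (c + 1) *
          (1 - p) ^ (n + 1 - (c + 1))
        = ((n + 1 : ℕ) : ℝ) * p * (p ^ c * (1 - p) ^ (n - c) * (n.choose c : ℝ)) := by
      intro c _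
      have h3 : ((n + 1 : ℕ) : ℝ) * (n.choose c : ℝ)
          = ((n + 1).choose (c + 1) : ℝ) * ((c + 1 : ℕ) : ℝ) := by
        exact_mod_cast Nat.add_one_mul_choose_eq n c
      rw [Nat.add_sub_add_right, pow_succ]
      linear_combination (-(p ^ c * p * (1 - p) ^ (n - c))) * h3
    rw [Finset.sum_congr rfl h2, ← Finset.mul_sum, h1]
    simp

/-- Let `φ ∈ (0,1)` and let `h ≥ 1`. Let `G` be a random variable on `ℕ` with
`P[G = g] = (1 - φ^h)^g * φ^h` (the number of nodes of height at most `h` preceding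
the first node of height exceeding `h`), and conditionally on `G = g` let `C` be
binomially distributed with `g` trials and success probability
`p = φ^(h-1) * (1 - φ) / (1 - φ^h)` (the probability that a geometric height equals `h`
given that it is at most `h`).  Then `E[C] = (1 - φ)/φ`, where
`E[C] = ∑_g P[G = g] * (∑_{c=0}^{g} c * choose g c * p^c * (1-p)^(g-c))`. -/
theorem expected_messages_at_height (φ : ℝ) (hφ : φ ∈ Set.Ioo (0 : ℝ) 1)
    (h : ℕ) (hh : 1 ≤ h) :
    (∑' g : ℕ, ((1 - φ ^ h) ^ g * φ ^ h) *
      (∑ c ∈ Finset.range (g + 1),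
        (c : ℝ) * (g.choose c : ℝ) * (φ ^ (h - 1) * (1 - φ) / (1 - φ ^ h)) ^ c *
          (1 - φ ^ (h - 1) * (1 - φ) / (1 - φ ^ h)) ^ (g - c))) = (1 - φ) / φ := by
  obtain ⟨h0, h1⟩ := hφ
  obtain ⟨k, rfl⟩ : ∃ k, h = k + 1 := ⟨h - 1, by omega⟩
  simp only [binom_mean_aux]
  have hp : 0 < φ ^ (k + 1) := pow_pos h0 _
  have hl : φ ^ (k + 1) < 1 := pow_lt_one₀ h0.le h1 (by omega)
  have hq : ‖1 - φ ^ (k + 1)‖ < 1 := by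
    rw [Real.norm_eq_abs, abs_lt]; constructor <;> linarith
  have hs := tsum_coe_mul_geometric_of_norm_lt_one hq
  have e : ∀ g : ℕ, ((1 - φ ^ (k + 1)) ^ g * φ ^ (k + 1)) *
      ((g : ℝ) * (φ ^ (k + 1 - 1) * (1 - φ) / (1 - φ ^ (k + 1))))
      = ((g : ℝ) * (1 - φ ^ (k + 1)) ^ g) *
        (φ ^ (k + 1) * (φ ^ k * (1 - φ) / (1 - φ ^ (k + 1)))) := by
    intro g
    rw [Nat.add_sub_cancel]; ring
  rw [tsum_congr e, tsum_mul_right, hs]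
  have hne : 1 - φ ^ (k + 1) ≠ 0 := by linarith
  have hk : φ ^ k ≠ 0 := (pow_pos h0 _).ne'
  rw [sub_sub_cancel]
  generalize hQ : 1 - φ ^ (k + 1) = Q at *
  rw [pow_succ]
  field_simp
  exact (pow_succ φ k).symm
end

section
/- Let ε ∈ (0,1/2], δ ∈ (0,1), p ∈ (0,1], and let k be a positive integer with p·k ≥ (3/ε²)·ln(2/δ). Let X be binomially distributed with ⌊(1−ε)k⌋ trials and success probability p, and let Y be binomially distributed with ⌈(1+ε)k⌉ trials and success probability p. Then P[X ≥ p·k] ≤ δ/2 and P[Y < p·k] ≤ δ/2. -/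
lemma kselect_chernoff (n : ℕ) (p a t : ℝ) (hp : 0 < p) (hp1 : p ≤ 1) (P : ℕ → Prop)
    [DecidablePred P] (hP : ∀ c, P c → t * a ≤ t * c) :
    (∑ c ∈ (Finset.range (n + 1)).filter P,
      (n.choose c : ℝ) * p ^ c * (1 - p) ^ (n - c)) ≤
      Real.exp (n * (p * (Real.exp t - 1)) - t * a) := by
  have h1 : (0:ℝ) ≤ 1 - p := by linarith
  calc _ ≤ ∑ c ∈ (Finset.range (n + 1)).filter P,
        (n.choose c : ℝ) * p ^ c * (1 - p) ^ (n - c) * Real.exp (t * c - t * a) := by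
        apply Finset.sum_le_sum
        intro c hc
        have := hP c (Finset.mem_filter.1 hc).2
        apply le_mul_of_one_le_right (by positivity)
        exact Real.one_le_exp (by linarith)
    _ ≤ ∑ c ∈ Finset.range (n + 1),
        (n.choose c : ℝ) * p ^ c * (1 - p) ^ (n - c) * Real.exp (t * c - t * a) := by
        apply Finset.sum_le_sum_of_subset_of_nonneg (Finset.filter_subset _ _)
        intros; positivity
    _ = (p * Real.exp t + (1 - p)) ^ n * Real.exp (-(t * a)) := by
        rw [add_pow, Finset.sum_mul]
        apply Finset.sum_congr rfl
        intro c _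
        rw [sub_eq_add_neg (t * (c:ℝ)), Real.exp_add, mul_pow, ← Real.exp_nat_mul, mul_comm t c]
        ring
    _ ≤ (Real.exp (p * (Real.exp t - 1))) ^ n * Real.exp (-(t * a)) := by
        gcongr
        have := Real.add_one_le_exp (p * (Real.exp t - 1))
        linarith
    _ = _ := by
        rw [← Real.exp_nat_mul, ← Real.exp_add, ← sub_eq_add_neg]

lemma kselect_exp1 (x : ℝ) (h0 : 0 < x) (h1 : x ≤ 1/2) :
    (1 - x) * Real.exp x ≤ 1 - x ^ 2 / 3 := by
  have h := Real.exp_bound' h0.le (by linarith) (n := 3) (by norm_num)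
  norm_num [Finset.sum_range_succ, Nat.factorial] at h
  have := mul_le_mul_of_nonneg_left h (show 0 ≤ 1 - x by linarith)
  have h3 : 0 < x ^ 3 := by positivity
  have h4 : 0 < x ^ 4 := by positivity
  nlinarith [sq_nonneg x]

lemma kselect_exp2 (x : ℝ) (h0 : 0 < x) (h1 : x ≤ 1/2) :
    (1 + x) * Real.exp (-x) ≤ 1 - x ^ 2 / 3 := by
  have h := Real.exp_bound (x := -x) (by rw [abs_neg, abs_of_pos h0]; linarith) (n := 4)
    (by norm_num)
  have h := (abs_le.1 h).2
  rw [abs_neg, abs_of_pos h0] at h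
  norm_num [Finset.sum_range_succ, Nat.factorial] at h
  have h' : Real.exp (-x) ≤ 1 - x + x ^ 2 / 2 - x ^ 3 / 6 + x ^ 4 * (5 / 96) := by nlinarith
  have := mul_le_mul_of_nonneg_left h' (show 0 ≤ 1 + x by linarith)
  have h2 : 0 ≤ x ^ 2 * (1 / 2 - x) := mul_nonneg (by positivity) (by linarith)
  have h4 : 0 < x ^ 4 := by positivity
  have h5 : 0 ≤ x ^ 4 * (1 / 2 - x) := mul_nonneg (by positivity) (by linarith)
  nlinarith


/-- **concentration for Approximate k-Select, Theorem 4.5.**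
Let `ε ∈ (0,1/2]`, `δ ∈ (0,1)`, `p ∈ (0,1]`, and let `k` be a positive integer
with `p·k ≥ (3/ε²)·ln(2/δ)`.  Let `X` be binomially distributed with `⌊(1-ε)k⌋`
trials and success probability `p`, and let `Y` be binomially distributed with
`⌈(1+ε)k⌉` trials and success probability `p`.  Then `P[X ≥ p·k] ≤ δ/2` and
`P[Y < p·k] ≤ δ/2`. -/
theorem kselect_sampling_concentration
    (ε δ p : ℝ) (hε : ε ∈ Set.Ioc (0 : ℝ) (1 / 2)) (hδ : δ ∈ Set.Ioo (0 : ℝ) 1)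
    (hp : p ∈ Set.Ioc (0 : ℝ) 1)
    (k : ℕ) (hk : 0 < k) (hpk : (3 / ε ^ 2) * Real.log (2 / δ) ≤ p * k) :
    (∑ c ∈ (Finset.range (⌊(1 - ε) * (k : ℝ)⌋₊ + 1)).filter
        (fun c : ℕ => p * k ≤ (c : ℝ)),
        ((⌊(1 - ε) * (k : ℝ)⌋₊).choose c : ℝ) * p ^ c *
          (1 - p) ^ (⌊(1 - ε) * (k : ℝ)⌋₊ - c)) ≤ δ / 2 ∧
    (∑ c ∈ (Finset.range (⌈(1 + ε) * (k : ℝ)⌉₊ + 1)).filter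
        (fun c : ℕ => (c : ℝ) < p * k),
        ((⌈(1 + ε) * (k : ℝ)⌉₊).choose c : ℝ) * p ^ c *
          (1 - p) ^ (⌈(1 + ε) * (k : ℝ)⌉₊ - c)) ≤ δ / 2 := by
  obtain ⟨hε0, hε1⟩ := hε
  obtain ⟨hδ0, hδ1⟩ := hδ
  obtain ⟨hp0, hp1⟩ := hp
  have hk' : (0:ℝ) < k := by exact_mod_cast hk
  have ha : 0 < p * k := by positivity
  have key : Real.exp (-(p * k * (ε ^ 2 / 3))) ≤ δ / 2 := by
    have h2 : δ / 2 = Real.exp (- Real.log (2 / δ)) := by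
      rw [← Real.log_inv, Real.exp_log (by positivity), inv_div]
    rw [h2]
    apply Real.exp_le_exp.2
    have := mul_le_mul_of_nonneg_right hpk (show 0 ≤ ε ^ 2 / 3 by positivity)
    have e : 3 / ε ^ 2 * Real.log (2 / δ) * (ε ^ 2 / 3) = Real.log (2 / δ) := by
      field_simp
    linarith
  constructor
  · refine (kselect_chernoff _ p (p * k) ε hp0 hp1 _ ?_).trans (le_trans ?_ key)
    · intro c hc
      exact mul_le_mul_of_nonneg_left hc hε0.le
    · apply Real.exp_le_exp.2
      have hn : (⌊(1 - ε) * (k : ℝ)⌋₊ : ℝ) ≤ (1 - ε) * k :=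
        Nat.floor_le (mul_nonneg (by linarith) hk'.le)
      have hE : 0 ≤ p * (Real.exp ε - 1) :=
        mul_nonneg hp0.le (by linarith [Real.add_one_le_exp ε])
      have h1 := mul_le_mul_of_nonneg_right hn hE
      have h2 := mul_le_mul_of_nonneg_left (kselect_exp1 ε hε0 hε1) ha.le
      linarith
  · refine (kselect_chernoff _ p (p * k) (-ε) hp0 hp1 _ ?_).trans (le_trans ?_ key)
    · intro c hc
      exact mul_le_mul_of_nonpos_left (le_of_lt hc) (by linarith)
    · apply Real.exp_le_exp.2
      have hn : (1 + ε) * k ≤ (⌈(1 + ε) * (k : ℝ)⌉₊ : ℝ) := Nat.le_ceil _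
      have hE : p * (Real.exp (-ε) - 1) ≤ 0 :=
        mul_nonpos_of_nonneg_of_nonpos hp0.le
          (by linarith [Real.exp_le_one_iff.2 (show -ε ≤ 0 by linarith)])
      have h1 := mul_le_mul_of_nonpos_right hn hE
      have h2 := mul_le_mul_of_nonneg_left (kselect_exp2 ε hε0 hε1) ha.le
      linarith
end
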